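/- In the PARTITION-based gadget instance for 2PAA(c): if the multiset w_1, …, w_n with total weight W admits a partition into two subsets U_1, U_2 with |U_1| = |U_2| = n/2 and Σ_{i∈U_1} w_i = Σ_{i∈U_2} w_i = W/2, then the constructed Second-Price Ad Auctions instance admits a feasible second-price allocation of total profit at least cW(n^5 + n + 2); conversely, if the instance admits an allocation of value at least cW(n^3 + cn^2 + n + 2), then such a balanced partition of w_1, …, w_n exists. -/

import Mathlib

noncomputable def budgetRem (m : ℕ) {V : Type*} [DecidableEq V]
    (b : Fin m → V → ℝ) (B : V → ℝ) (alloc : Fin m → Option (V × V)) : ℕ → V → ℝ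
  | 0 => B
  | t + 1 => fun v =>
    if h : t < m then
      match alloc ⟨t, h⟩ with
      | some p =>
        if v = p.1 then
          budgetRem m b B alloc t v - min (b ⟨t, h⟩ p.2) (budgetRem m b B alloc t p.2)
        else budgetRem m b B alloc t v
      | none => budgetRem m b B alloc t v
    else budgetRem m b B alloc t v

noncomputable def price2PAA (m : ℕ) {V : Type*} [DecidableEq V]
    (b : Fin m → V → ℝ) (B : V → ℝ) (alloc : Fin m → Option (V × V)) (t : Fin m) : ℝ :=
  match alloc t with
  | some p => min (b t p.2) (budgetRem m b B alloc t.val p.2)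
  | none => 0

noncomputable def value2PAA (m : ℕ) {V : Type*} [DecidableEq V]
    (b : Fin m → V → ℝ) (B : V → ℝ) (alloc : Fin m → Option (V × V)) : ℝ :=
  ∑ t : Fin m, price2PAA m b B alloc t

def Feasible2PAA (m : ℕ) {V : Type*} [DecidableEq V]
    (b : Fin m → V → ℝ) (B : V → ℝ) (alloc : Fin m → Option (V × V)) : Prop :=
  ∀ (t : Fin m) (p : V × V), alloc t = some p →
    p.1 ≠ p.2 ∧
    min (b t p.2) (budgetRem m b B alloc t.val p.2) ≤
      min (b t p.1) (budgetRem m b B alloc t.val p.1)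

/-- Bidders of the PARTITION gadget: `Sum.inl 0 = a`, `Sum.inl 1 = d₁`, `Sum.inl 2 = d₂`,
`Sum.inl 3 = f`, and `Sum.inr i = hᵢ` for `i < n²`. -/
abbrev GadgetV (n : ℕ) := Fin 4 ⊕ Fin (n ^ 2)

/-- Budgets: `a, d₁, d₂ ↦ cW(1 + n/2)`, `f ↦ cW(n³ + 1)`, `hᵢ ↦ cWn³`. -/
noncomputable def gadgetBudget (c n : ℕ) (W : ℝ) : GadgetV n → ℝ
  | Sum.inl i => if i.val ≤ 2 then c * W * (1 + (n : ℝ) / 2) else c * W * ((n : ℝ) ^ 3 + 1)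
  | Sum.inr _ => c * W * (n : ℝ) ^ 3

/-- Bids of the PARTITION gadget.  Keywords arrive in the order
`c_1, …, c_n, e_1, e_2, g_{1,1}, …, g_{1,c}, …, g_{n²,1}, …, g_{n²,c}`:
keyword index `t < n` is `c_{t+1}` (bids `c(w_t + W)` from `a, d₁, d₂`);
`t = n` is `e₁` (bid `cW` from `d₁`, `cW/2` from `f`); `t = n + 1` is `e₂`
(bid `cW` from `d₂`, `cW/2` from `f`); and `t ≥ n + 2` is `g_{i,k}` with
`i = (t − (n+2))/c` (bid `W(n³+1)` from `f` and `Wn³` from `hᵢ`). -/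
noncomputable def gadgetBid (c n : ℕ) (w : Fin n → ℕ) (W : ℝ) :
    Fin (n + 2 + c * n ^ 2) → GadgetV n → ℝ := fun t v =>
  if ht : t.val < n then
    match v with
    | Sum.inl i => if i.val ≤ 2 then c * ((w ⟨t.val, ht⟩ : ℝ) + W) else 0
    | Sum.inr _ => 0
  else if t.val = n then
    match v with
    | Sum.inl i => if i.val = 1 then c * W else if i.val = 3 then c * W / 2 else 0
    | Sum.inr _ => 0
  else if t.val = n + 1 then
    match v with
    | Sum.inl i => if i.val = 2 then c * W else if i.val = 3 then c * W / 2 else 0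
    | Sum.inr _ => 0
  else
    match v with
    | Sum.inl i => if i.val = 3 then W * ((n : ℝ) ^ 3 + 1) else 0
    | Sum.inr j => if j.val = (t.val - (n + 2)) / c then W * (n : ℝ) ^ 3 else 0

section General
variable {m : ℕ} {V : Type*} [DecidableEq V]
    {b : Fin m → V → ℝ} {B : V → ℝ} {alloc : Fin m → Option (V × V)}

noncomputable def prN (m : ℕ) {V : Type*} [DecidableEq V]
    (b : Fin m → V → ℝ) (B : V → ℝ) (alloc : Fin m → Option (V × V)) (t : ℕ) : ℝ :=
  if h : t < m then price2PAA m b B alloc ⟨t, h⟩ else 0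

noncomputable def payN (m : ℕ) {V : Type*} [DecidableEq V]
    (b : Fin m → V → ℝ) (B : V → ℝ) (alloc : Fin m → Option (V × V)) (v : V) (t : ℕ) : ℝ :=
  budgetRem m b B alloc t v - budgetRem m b B alloc (t + 1) v

lemma value_eq : value2PAA m b B alloc = ∑ t ∈ Finset.range m, prN m b B alloc t := by
  rw [value2PAA, Finset.sum_range]
  refine Finset.sum_congr rfl fun t _ => ?_
  simp [prN]

lemma rem_eq (t : ℕ) (v : V) :
    budgetRem m b B alloc t v = B v - ∑ s ∈ Finset.range t, payN m b B alloc v s := by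
  simp only [payN]
  rw [Finset.sum_range_sub']
  simp [budgetRem]

lemma rem_succ_some {t : ℕ} (h : t < m) {p : V × V} (hp : alloc ⟨t, h⟩ = some p) (v : V) :
    budgetRem m b B alloc (t + 1) v = if v = p.1 then
          budgetRem m b B alloc t v - min (b ⟨t, h⟩ p.2) (budgetRem m b B alloc t p.2)
        else budgetRem m b B alloc t v := by
  rw [budgetRem]; simp only [h, dite_true, hp]

lemma rem_succ_none {t : ℕ} (h : t < m) (hp : alloc ⟨t, h⟩ = none) (v : V) :
    budgetRem m b B alloc (t + 1) v = budgetRem m b B alloc t v := by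
  rw [budgetRem]; simp only [h, dite_true, hp]

lemma prN_some {t : ℕ} (h : t < m) {p : V × V} (hp : alloc ⟨t, h⟩ = some p) :
    prN m b B alloc t = min (b ⟨t, h⟩ p.2) (budgetRem m b B alloc t p.2) := by
  simp only [prN, h, dite_true, price2PAA, hp]

lemma prN_none {t : ℕ} (h : t < m) (hp : alloc ⟨t, h⟩ = none) :
    prN m b B alloc t = 0 := by
  simp only [prN, h, dite_true, price2PAA, hp]

lemma pay_some {t : ℕ} (h : t < m) {p : V × V} (hp : alloc ⟨t, h⟩ = some p) (v : V) :
    payN m b B alloc v t = if v = p.1 then prN m b B alloc t else 0 := by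
  rw [payN, rem_succ_some h hp, prN_some h hp]; split_ifs <;> ring

lemma pay_none {t : ℕ} (h : t < m) (hp : alloc ⟨t, h⟩ = none) (v : V) :
    payN m b B alloc v t = 0 := by
  rw [payN, rem_succ_none h hp]; ring

lemma rem_nonneg (hB : ∀ v, 0 ≤ B v) (hf : Feasible2PAA m b B alloc) (t : ℕ) (v : V) :
    0 ≤ budgetRem m b B alloc t v := by
  induction t generalizing v with
  | zero => exact hB v
  | succ t ih =>
    by_cases h : t < m
    · cases hp : alloc ⟨t, h⟩ with
      | none => rw [rem_succ_none h hp]; exact ih v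
      | some p =>
        rw [rem_succ_some h hp]
        have := (hf _ p hp).2
        split_ifs with hv
        · subst hv
          have h2 := min_le_right (b ⟨t, h⟩ p.1) (budgetRem m b B alloc t p.1)
          simp only at this
          linarith
        · exact ih v
    · rw [budgetRem]; simp only [h, dite_false]; exact ih v

lemma prN_nonneg (hb : ∀ t v, 0 ≤ b t v) (hB : ∀ v, 0 ≤ B v) (hf : Feasible2PAA m b B alloc)
    (t : ℕ) : 0 ≤ prN m b B alloc t := by
  by_cases h : t < m
  · cases hp : alloc ⟨t, h⟩ with
    | none => rw [prN_none h hp]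
    | some p => rw [prN_some h hp]; exact le_min (hb _ _) (rem_nonneg hB hf _ _)
  · simp [prN, h]

/-- The price is at most the truncated bids of both participants. -/
lemma prN_le (hf : Feasible2PAA m b B alloc) {t : ℕ} (h : t < m) {p : V × V}
    (hp : alloc ⟨t, h⟩ = some p) :
    prN m b B alloc t ≤ b ⟨t, h⟩ p.1 ∧ prN m b B alloc t ≤ b ⟨t, h⟩ p.2 ∧
    prN m b B alloc t ≤ budgetRem m b B alloc t p.1 ∧
    prN m b B alloc t ≤ budgetRem m b B alloc t p.2 := by
  have := (hf _ p hp).2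
  rw [prN_some h hp]
  simp only at this
  exact ⟨this.trans (min_le_left _ _), min_le_left _ _, this.trans (min_le_right _ _),
    min_le_right _ _⟩

lemma pay_bounds (hb : ∀ t v, 0 ≤ b t v) (hB : ∀ v, 0 ≤ B v) (hf : Feasible2PAA m b B alloc)
    {t : ℕ} (h : t < m) (v : V) :
    0 ≤ payN m b B alloc v t ∧ payN m b B alloc v t ≤ b ⟨t, h⟩ v ∧
      payN m b B alloc v t ≤ prN m b B alloc t := by
  have h0 := prN_nonneg hb hB hf t
  cases hp : alloc ⟨t, h⟩ with
  | none => rw [pay_none h hp]; exact ⟨le_rfl, hb _ _, h0⟩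
  | some p =>
    rw [pay_some h hp]
    split_ifs with hv
    · subst hv; exact ⟨h0, (prN_le hf h hp).1, le_rfl⟩
    · exact ⟨le_rfl, hb _ _, h0⟩

lemma pay_add_le (hb : ∀ t v, 0 ≤ b t v) (hB : ∀ v, 0 ≤ B v) (hf : Feasible2PAA m b B alloc)
    {t : ℕ} (h : t < m) {u v : V} (huv : u ≠ v) :
    payN m b B alloc u t + payN m b B alloc v t ≤ prN m b B alloc t ∧
    (payN m b B alloc u t = 0 ∨ payN m b B alloc v t = 0) := by
  have h0 := prN_nonneg hb hB hf t
  cases hp : alloc ⟨t, h⟩ with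
  | none => rw [pay_none h hp, pay_none h hp]; simpa using h0
  | some p =>
    rw [pay_some h hp, pay_some h hp]
    by_cases h1 : u = p.1
    · have h2 : v ≠ p.1 := fun h2 => huv (h1.trans h2.symm)
      simp [h1, h2]
    · by_cases h2 : v = p.1 <;> simp [h1, h2, h0]

end General

section Bids
variable {c n : ℕ} {w : Fin n → ℕ} {W : ℝ}

lemma bid_nonneg (hW : 0 ≤ W) (t) (v) : 0 ≤ gadgetBid c n w W t v := by
  unfold gadgetBid
  rcases v with i | j <;> dsimp only <;> split_ifs <;> positivity

lemma budget_nonneg (hW : 0 ≤ W) (v) : 0 ≤ gadgetBudget c n W v := by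
  unfold gadgetBudget
  rcases v with i | j <;> dsimp only <;> (try split_ifs) <;> positivity

lemma bid_c {t : ℕ} (h : t < n + 2 + c * n ^ 2) (ht : t < n) (v : GadgetV n) :
    gadgetBid c n w W ⟨t, h⟩ v =
      if v = Sum.inl 0 ∨ v = Sum.inl 1 ∨ v = Sum.inl 2 then c * ((w ⟨t, ht⟩ : ℝ) + W) else 0 := by
  rcases v with i | j
  · fin_cases i <;> simp [gadgetBid, ht]
  · simp [gadgetBid, ht]

lemma bid_e1 (h : n < n + 2 + c * n ^ 2) (v : GadgetV n) :
    gadgetBid c n w W ⟨n, h⟩ v =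
      if v = Sum.inl 1 then c * W else if v = Sum.inl 3 then c * W / 2 else 0 := by
  rcases v with i | j
  · fin_cases i <;> simp [gadgetBid]
  · simp [gadgetBid]

lemma bid_e2 (h : n + 1 < n + 2 + c * n ^ 2) (v : GadgetV n) :
    gadgetBid c n w W ⟨n + 1, h⟩ v =
      if v = Sum.inl 2 then c * W else if v = Sum.inl 3 then c * W / 2 else 0 := by
  rcases v with i | j
  · fin_cases i <;> simp [gadgetBid]
  · simp [gadgetBid]

lemma div_lt_aux {j : ℕ} (h : n + 2 + j < n + 2 + c * n ^ 2) : j / c < n ^ 2 :=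
  Nat.div_lt_of_lt_mul (by omega)

lemma bid_g {j : ℕ} (h : n + 2 + j < n + 2 + c * n ^ 2) (v : GadgetV n) :
    gadgetBid c n w W ⟨n + 2 + j, h⟩ v =
      if v = Sum.inl 3 then W * ((n : ℝ) ^ 3 + 1) else
      if v = Sum.inr ⟨j / c, div_lt_aux h⟩ then W * (n : ℝ) ^ 3 else 0 := by
  have h1 : ¬ (n + 2 + j < n) := by omega
  have h2 : ¬ (n + 2 + j = n) := by omega
  have h3 : ¬ (n + 2 + j = n + 1) := by omega
  have h4 : n + 2 + j - (n + 2) = j := by omega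
  rcases v with i | k
  · fin_cases i <;> simp [gadgetBid, h1, h2, h3]
  · simp [gadgetBid, h1, h2, h3, h4, Fin.ext_iff]

end Bids

section Converse
variable {c n : ℕ} {w : Fin n → ℕ} {W : ℝ}
    {alloc : Fin (n + 2 + c * n ^ 2) → Option (GadgetV n × GadgetV n)}

lemma rem_stay {t : ℕ} (v : GadgetV n) {b : Fin (n + 2 + c * n ^ 2) → GadgetV n → ℝ}
    {B : GadgetV n → ℝ}
    (h : payN _ b B alloc v t = 0) : budgetRem _ b B alloc (t+1) v = budgetRem _ b B alloc t v := by
  unfold payN at h; linarith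

lemma rem_h (hW : 0 ≤ W)
    (hf : Feasible2PAA _ (gadgetBid c n w W) (gadgetBudget c n W) alloc)
    {t : ℕ} (ht : t ≤ n + 2) (k : Fin (n ^ 2)) :
    budgetRem _ (gadgetBid c n w W) (gadgetBudget c n W) alloc t (Sum.inr k)
      = c * W * (n : ℝ) ^ 3 := by
  induction t with
  | zero => rfl
  | succ t ih =>
    rw [rem_stay, ih (by omega)]
    have hm : t < n + 2 + c * n ^ 2 := by omega
    have h := pay_bounds (bid_nonneg hW) (budget_nonneg hW) hf hm (Sum.inr k)
    have : gadgetBid c n w W ⟨t, hm⟩ (Sum.inr k) = 0 := by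
      rcases Nat.lt_or_ge t n with h1 | h1
      · rw [bid_c hm h1]; simp
      · obtain rfl | rfl : t = n ∨ t = n + 1 := by omega
        · rw [bid_e1]; simp
        · rw [bid_e2]; simp
    rw [this] at h
    linarith [h.1, h.2.1]

lemma g_phase (hW : 0 < W) (hc : 1 ≤ c)
    (hf : Feasible2PAA _ (gadgetBid c n w W) (gadgetBudget c n W) alloc)
    (hR1 : c * W * (n : ℝ) ^ 3 <
      budgetRem _ (gadgetBid c n w W) (gadgetBudget c n W) alloc (n + 2) (Sum.inl 3))
    (hR2 : budgetRem _ (gadgetBid c n w W) (gadgetBudget c n W) alloc (n + 2) (Sum.inl 3)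
      ≤ c * W * ((n : ℝ) ^ 3 + 1))
    (j : ℕ) (hj : j ≤ c * n ^ 2) :
    (∃ k : ℕ, k < c ∧
      budgetRem _ (gadgetBid c n w W) (gadgetBudget c n W) alloc (n + 2 + j) (Sum.inl 3)
        = budgetRem _ (gadgetBid c n w W) (gadgetBudget c n W) alloc (n + 2) (Sum.inl 3)
          - k * (W * (n : ℝ) ^ 3) ∧
      ∑ s ∈ Finset.range j, prN _ (gadgetBid c n w W) (gadgetBudget c n W) alloc (n + 2 + s)
        = k * (W * (n : ℝ) ^ 3) ∧
      ∀ i, budgetRem _ (gadgetBid c n w W) (gadgetBudget c n W) alloc (n + 2 + j) (Sum.inr i)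
        = c * W * (n : ℝ) ^ 3) ∨
    (budgetRem _ (gadgetBid c n w W) (gadgetBudget c n W) alloc (n + 2 + j) (Sum.inl 3) ≤ c * W ∧
      ∑ s ∈ Finset.range j, prN _ (gadgetBid c n w W) (gadgetBudget c n W) alloc (n + 2 + s)
        ≤ c * W * (n : ℝ) ^ 3 + ((j : ℝ) - 1) * (c * W)) := by
  have hb := bid_nonneg (c := c) (w := w) hW.le
  have hB := budget_nonneg (c := c) (n := n) hW.le
  have hc1 : (1 : ℝ) ≤ c := by exact_mod_cast hc
  have hcW : 0 < c * W := by positivity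
  induction j with
  | zero => left; exact ⟨0, by omega, by simp, by simp, fun i => rem_h hW.le hf le_rfl i⟩
  | succ j ih =>
    have hm : n + 2 + j < n + 2 + c * n ^ 2 := by omega
    have hP0 := prN_nonneg hb hB hf (n + 2 + j)
    have hpay := fun v => pay_bounds hb hB hf hm v
    -- classification of the step
    have key : (prN _ (gadgetBid c n w W) (gadgetBudget c n W) alloc (n + 2 + j) = 0) ∨
        alloc ⟨n + 2 + j, hm⟩ = some (Sum.inl 3, Sum.inr ⟨j / c, div_lt_aux hm⟩) ∨
        alloc ⟨n + 2 + j, hm⟩ = some (Sum.inr ⟨j / c, div_lt_aux hm⟩, Sum.inl 3) := by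
      cases hp : alloc ⟨n + 2 + j, hm⟩ with
      | none => left; exact prN_none hm hp
      | some p =>
        have hne := (hf _ p hp).1
        obtain ⟨h1, h2, -, -⟩ := prN_le hf hm hp
        rw [bid_g] at h1 h2
        obtain ⟨x, y⟩ := p
        simp only at h1 h2 hne
        split_ifs at h1 h2 with a1 a2 a3 a4 a5 a6 <;>
          first | (left; linarith) | (exfalso; apply hne; simp_all; done) |
            (right; simp_all)
    have hsum : ∑ s ∈ Finset.range (j+1),
        prN _ (gadgetBid c n w W) (gadgetBudget c n W) alloc (n + 2 + s) =
        ∑ s ∈ Finset.range j, prN _ (gadgetBid c n w W) (gadgetBudget c n W) alloc (n + 2 + s) +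
          prN _ (gadgetBid c n w W) (gadgetBudget c n W) alloc (n + 2 + j) :=
      Finset.sum_range_succ _ _
    rw [hsum]
    rcases ih (by omega) with ⟨k, hk, hF, hS, hH⟩ | ⟨hF, hS⟩
    · rcases key with h0 | h0 | h0
      · left
        have hst : ∀ v, payN _ (gadgetBid c n w W) (gadgetBudget c n W) alloc v (n+2+j) = 0 :=
          fun v => by have := hpay v; rw [h0] at this; linarith [this.1, this.2.2]
        refine ⟨k, hk, ?_, ?_, fun i => ?_⟩
        · rw [← hF]; exact rem_stay _ (hst _)
        · rw [hS, h0]; ring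
        · rw [← hH i]; exact rem_stay _ (hst _)
      · have hpr := prN_some (b := gadgetBid c n w W) (B := gadgetBudget c n W) hm h0
        rw [bid_g] at hpr
        simp only [reduceCtorEq, if_false, if_true, hH] at hpr
        rw [min_eq_left (by nlinarith [show 0 ≤ W * (n:ℝ)^3 by positivity])] at hpr
        have hrem := rem_succ_some (b := gadgetBid c n w W) (B := gadgetBudget c n W) hm h0
        rw [← prN_some (b := gadgetBid c n w W) (B := gadgetBudget c n W) hm h0, hpr] at hrem
        rw [hpr, hS]
        change _ ∨ (budgetRem _ _ _ _ (n+2+j+1) _ ≤ _ ∧ _)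
        by_cases hk1 : k + 1 < c
        · left
          refine ⟨k+1, hk1, ?_, ?_, fun i => ?_⟩
          · change budgetRem _ _ _ _ (n+2+j+1) _ = _
            rw [hrem]; simp only [if_true]; rw [hF]; push_cast; ring
          · push_cast; ring
          · change budgetRem _ _ _ _ (n+2+j+1) _ = _
            rw [hrem]; simp [hH]
        · right
          have hkc : k + 1 = c := by omega
          have hkc' : (k : ℝ) + 1 = c := by exact_mod_cast hkc
          have hk' : (k : ℝ) = c - 1 := by linarith
          constructor
          · rw [hrem]; simp only [if_true]; rw [hF, hk']; nlinarith
          · rw [hk']; push_cast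
            have : 0 ≤ (j : ℝ) * (c * W) := by positivity
            nlinarith
      · exfalso
        have h2 := (hf _ _ h0).2
        rw [bid_g, bid_g] at h2
        simp only [reduceCtorEq, if_false, if_true, hF] at h2
        have h3 := h2.trans (min_le_left _ _)
        have hk1 : (k : ℝ) + 1 ≤ c := by exact_mod_cast hk
        have hpos : 0 ≤ W * (n:ℝ)^3 := by positivity
        rcases min_le_iff.1 h3 with h4 | h4
        · nlinarith
        · nlinarith
    · right
      have hle : prN _ (gadgetBid c n w W) (gadgetBudget c n W) alloc (n + 2 + j) ≤ c * W := by
        rcases key with h0 | h0 | h0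
        · rw [h0]; exact hcW.le
        · exact (prN_le hf hm h0).2.2.1.trans hF
        · exact (prN_le hf hm h0).2.2.2.trans hF
      constructor
      · have := (hpay (Sum.inl 3)).1
        unfold payN at this
        change budgetRem _ _ _ _ (n+2+j+1) _ ≤ _
        linarith
      · push_cast; nlinarith

end Converse

section Converse2
variable {c n : ℕ} {w : Fin n → ℕ} {W : ℝ}
    {alloc : Fin (n + 2 + c * n ^ 2) → Option (GadgetV n × GadgetV n)}

lemma pr_c_le (hW : 0 ≤ W)
    (hf : Feasible2PAA _ (gadgetBid c n w W) (gadgetBudget c n W) alloc)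
    {t : ℕ} (ht : t < n) :
    prN _ (gadgetBid c n w W) (gadgetBudget c n W) alloc t ≤ c * ((w ⟨t, ht⟩ : ℝ) + W) := by
  have hm : t < n + 2 + c * n ^ 2 := by omega
  have h0 : (0:ℝ) ≤ c * ((w ⟨t, ht⟩ : ℝ) + W) := by positivity
  cases hp : alloc ⟨t, hm⟩ with
  | none => rw [prN_none hm hp]; exact h0
  | some p =>
    refine (prN_le hf hm hp).1.trans ?_
    rw [bid_c hm ht]
    split_ifs <;> linarith

/-- On `e₁`: price at most `cW/2`; if `f` pays `cW/2` then `d₁` has exactly `cW/2` left. -/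
lemma e1_fact (hW : 0 < W) (hc : 1 ≤ c)
    (hf : Feasible2PAA _ (gadgetBid c n w W) (gadgetBudget c n W) alloc) :
    prN _ (gadgetBid c n w W) (gadgetBudget c n W) alloc n ≤ c * W / 2 ∧
    (c * W / 2 ≤ payN _ (gadgetBid c n w W) (gadgetBudget c n W) alloc (Sum.inl 3) n →
      budgetRem _ (gadgetBid c n w W) (gadgetBudget c n W) alloc n (Sum.inl 1) = c * W / 2 ∧
      payN _ (gadgetBid c n w W) (gadgetBudget c n W) alloc (Sum.inl 2) n = 0) := by
  have hm : n < n + 2 + c * n ^ 2 := by omega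
  have hc1 : (1 : ℝ) ≤ c := by exact_mod_cast hc
  have hcW : 0 < c * W := by positivity
  cases hp : alloc ⟨n, hm⟩ with
  | none =>
    rw [prN_none hm hp, pay_none hm hp]
    exact ⟨by linarith, fun h => by linarith⟩
  | some p =>
    obtain ⟨x, y⟩ := p
    have hne := (hf _ _ hp).1
    obtain ⟨h1, h2, -, -⟩ := prN_le hf hm hp
    rw [bid_e1] at h1 h2
    simp only at h1 h2 hne
    have hle : prN _ (gadgetBid c n w W) (gadgetBudget c n W) alloc n ≤ c * W / 2 := by
      split_ifs at h1 h2 with a1 a2 a3 a4 a5 a6 <;>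
        first | linarith | (exfalso; apply hne; simp_all)
    refine ⟨hle, fun h => ?_⟩
    rw [pay_some hm hp] at h
    split_ifs at h with hx
    · simp only at hx
      subst hx
      by_cases hy : y = Sum.inl 1
      · subst hy
        have hpr := prN_some (b := gadgetBid c n w W) (B := gadgetBudget c n W) hm hp
        rw [bid_e1] at hpr
        simp only [if_true] at hpr
        refine ⟨?_, ?_⟩
        · rcases min_choice (c * W) (budgetRem _ (gadgetBid c n w W) (gadgetBudget c n W) alloc n
            (Sum.inl 1)) with h4 | h4 <;> rw [h4] at hpr <;> linarith
        · rw [pay_some hm hp]; simp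
      · rw [if_neg hy, if_neg (Ne.symm hne)] at h2
        linarith
    · linarith

lemma e2_fact (hW : 0 < W) (hc : 1 ≤ c)
    (hf : Feasible2PAA _ (gadgetBid c n w W) (gadgetBudget c n W) alloc) :
    prN _ (gadgetBid c n w W) (gadgetBudget c n W) alloc (n + 1) ≤ c * W / 2 ∧
    (c * W / 2 ≤ payN _ (gadgetBid c n w W) (gadgetBudget c n W) alloc (Sum.inl 3) (n + 1) →
      budgetRem _ (gadgetBid c n w W) (gadgetBudget c n W) alloc (n + 1) (Sum.inl 2)
        = c * W / 2) := by
  have hm : n + 1 < n + 2 + c * n ^ 2 := by omega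
  have hc1 : (1 : ℝ) ≤ c := by exact_mod_cast hc
  have hcW : 0 < c * W := by positivity
  cases hp : alloc ⟨n + 1, hm⟩ with
  | none =>
    rw [prN_none hm hp, pay_none hm hp]
    exact ⟨by linarith, fun h => by linarith⟩
  | some p =>
    obtain ⟨x, y⟩ := p
    have hne := (hf _ _ hp).1
    obtain ⟨h1, h2, -, -⟩ := prN_le hf hm hp
    rw [bid_e2] at h1 h2
    simp only at h1 h2 hne
    have hle : prN _ (gadgetBid c n w W) (gadgetBudget c n W) alloc (n + 1) ≤ c * W / 2 := by
      split_ifs at h1 h2 with a1 a2 a3 a4 a5 a6 <;>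
        first | linarith | (exfalso; apply hne; simp_all)
    refine ⟨hle, fun h => ?_⟩
    rw [pay_some hm hp] at h
    split_ifs at h with hx
    · simp only at hx
      subst hx
      by_cases hy : y = Sum.inl 2
      · subst hy
        have hpr := prN_some (b := gadgetBid c n w W) (B := gadgetBudget c n W) hm hp
        rw [bid_e2] at hpr
        simp only [if_true] at hpr
        rcases min_choice (c * W) (budgetRem _ (gadgetBid c n w W) (gadgetBudget c n W) alloc
            (n + 1) (Sum.inl 2)) with h4 | h4 <;> rw [h4] at hpr <;> linarith
      · rw [if_neg hy, if_neg (Ne.symm hne)] at h2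
        linarith
    · linarith

lemma sum_q (hW : W = ∑ i, (w i : ℝ)) : ∑ i, (c * ((w i : ℝ) + W) : ℝ) = c * W * (n + 1) := by
  rw [← Finset.mul_sum, Finset.sum_add_distrib, ← hW]
  simp; ring

lemma converse_main (hc : 1 ≤ c) (hn : Even n) (hlarge : 4 * c ≤ n + 2)
    (hW : W = ∑ i, (w i : ℝ)) (hWpos : 0 < W)
    (hf : Feasible2PAA _ (gadgetBid c n w W) (gadgetBudget c n W) alloc)
    (hv : value2PAA _ (gadgetBid c n w W) (gadgetBudget c n W) alloc ≥
          c * W * ((n : ℝ) ^ 3 + c * (n : ℝ) ^ 2 + n + 2)) :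
    ∃ S : Finset (Fin n), 2 * S.card = n ∧ 2 * ∑ i ∈ S, (w i : ℝ) = W := by
  have hb := bid_nonneg (c := c) (w := w) hWpos.le
  have hB := budget_nonneg (c := c) (n := n) hWpos.le
  have hc1 : (1 : ℝ) ≤ c := by exact_mod_cast hc
  have hcW : 0 < c * W := by positivity
  have hn2 : (2 : ℝ) ≤ n := by exact_mod_cast (by omega : 2 ≤ n)
  obtain ⟨he1, he1'⟩ := e1_fact hWpos hc hf
  obtain ⟨he2, he2'⟩ := e2_fact hWpos hc hf
  have hq := sum_q (c := c) hW
  have hcsum : ∑ t ∈ Finset.range n, prN _ (gadgetBid c n w W) (gadgetBudget c n W) alloc t ≤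
      c * W * (n + 1) := by
    rw [Finset.sum_range, ← hq]
    exact Finset.sum_le_sum fun i _ => pr_c_le hWpos.le hf i.2
  rw [value_eq, Finset.sum_range_add, Finset.sum_range_succ, Finset.sum_range_succ] at hv
  -- budget of f after the first phases
  have hfpay : ∀ t < n, payN _ (gadgetBid c n w W) (gadgetBudget c n W) alloc (Sum.inl 3) t = 0 := by
    intro t ht
    have hm : t < n + 2 + c * n ^ 2 := by omega
    have h := pay_bounds hb hB hf hm (Sum.inl 3)
    rw [bid_c hm ht] at h
    simp at h
    linarith [h.1, h.2.1]
  have hRf : budgetRem _ (gadgetBid c n w W) (gadgetBudget c n W) alloc (n + 2) (Sum.inl 3) =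
      c * W * ((n : ℝ) ^ 3 + 1) -
        payN _ (gadgetBid c n w W) (gadgetBudget c n W) alloc (Sum.inl 3) n -
        payN _ (gadgetBid c n w W) (gadgetBudget c n W) alloc (Sum.inl 3) (n + 1) := by
    rw [rem_eq, Finset.sum_range_succ, Finset.sum_range_succ,
      Finset.sum_eq_zero (fun t ht => hfpay t (Finset.mem_range.1 ht))]
    simp [gadgetBudget]; ring
  have hy1 := pay_bounds hb hB hf (show n < n + 2 + c * n ^ 2 by omega) (Sum.inl 3)
  have hy2 := pay_bounds hb hB hf (show n + 1 < n + 2 + c * n ^ 2 by omega) (Sum.inl 3)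
  have hR : budgetRem _ (gadgetBid c n w W) (gadgetBudget c n W) alloc (n + 2) (Sum.inl 3)
      ≤ c * W * (n : ℝ) ^ 3 := by
    by_contra hcon
    push Not at hcon
    rcases g_phase hWpos hc hf hcon (by rw [hRf]; linarith [hy1.1, hy2.1]) (c * n ^ 2) le_rfl with
      ⟨k, hk, -, hS, -⟩ | ⟨-, hS⟩
    · rw [hS] at hv
      have hk1 : (k : ℝ) ≤ c := by exact_mod_cast hk.le
      have : (k : ℝ) * (W * (n:ℝ) ^ 3) ≤ c * (W * (n:ℝ) ^ 3) := by gcongr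
      have h5 : 0 < c * W * (c * (n:ℝ)^2) := by positivity
      nlinarith
    · push_cast at hS
      nlinarith
  obtain ⟨hd1, hd1'⟩ := he1' (by nlinarith [hy1.2.2, hy2.2.2])
  have hd2 := he2' (by nlinarith [hy1.2.2, hy2.2.2])
  rw [rem_stay _ hd1'] at hd2
  rw [rem_eq, Finset.sum_range] at hd1 hd2
  have hB1 : gadgetBudget c n W (Sum.inl 1) = c * W * (1 + (n:ℝ)/2) := by simp [gadgetBudget]
  have hB2 : gadgetBudget c n W (Sum.inl 2) = c * W * (1 + (n:ℝ)/2) := by simp [gadgetBudget]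
  rw [hB1] at hd1
  rw [hB2] at hd2
  have hstep : ∀ i : Fin n,
      payN _ (gadgetBid c n w W) (gadgetBudget c n W) alloc (Sum.inl 1) i +
      payN _ (gadgetBid c n w W) (gadgetBudget c n W) alloc (Sum.inl 2) i ≤
      c * ((w i : ℝ) + W) := fun i =>
    (pay_add_le hb hB hf (show (i:ℕ) < n + 2 + c * n ^ 2 by omega) (by simp)).1.trans
      (pr_c_le hWpos.le hf i.2)
  have heq := (Finset.sum_eq_sum_iff_of_le (s := Finset.univ) (fun i _ => hstep i)).1 (by
    rw [Finset.sum_add_distrib, hq]; linarith)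
  classical
  let S : Finset (Fin n) := Finset.univ.filter fun i =>
    payN _ (gadgetBid c n w W) (gadgetBudget c n W) alloc (Sum.inl 1) i ≠ 0
  have hpt : ∀ i : Fin n, payN _ (gadgetBid c n w W) (gadgetBudget c n W) alloc (Sum.inl 1) i =
      if i ∈ S then c * ((w i : ℝ) + W) else 0 := by
    intro i
    have h1 := (pay_add_le hb hB hf (show (i:ℕ) < n + 2 + c * n ^ 2 by omega)
      (show (Sum.inl 1 : GadgetV n) ≠ Sum.inl 2 by simp)).2
    have h2 := heq i (Finset.mem_univ i)
    by_cases hi : payN _ (gadgetBid c n w W) (gadgetBudget c n W) alloc (Sum.inl 1) i = 0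
    · simp [S, hi]
    · have h3 := h1.resolve_left hi
      rw [h3] at h2
      simp only [S, Finset.mem_filter, Finset.mem_univ, true_and, ne_eq, hi, not_false_eq_true,
        if_true]
      linarith
  rw [Finset.sum_congr rfl (fun i _ => hpt i), Finset.sum_ite_mem, Finset.univ_inter,
    ← Finset.mul_sum, Finset.sum_add_distrib] at hd1
  simp only [Finset.sum_const, nsmul_eq_mul] at hd1
  have hA0 : 0 ≤ ∑ i ∈ S, (w i : ℝ) := by positivity
  have hA1 : ∑ i ∈ S, (w i : ℝ) ≤ W := by
    rw [hW]; exact Finset.sum_le_univ_sum_of_nonneg (fun i => by positivity)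
  obtain ⟨A, hAdef⟩ : ∃ A, A = ∑ i ∈ S, (w i : ℝ) := ⟨_, rfl⟩
  rw [← hAdef] at hd1 hA0 hA1
  have hA : 2 * A + 2 * (S.card : ℝ) * W = W + n * W := by
    have : (c : ℝ) * (2 * A + 2 * (S.card : ℝ) * W) = c * (W + n * W) := by linarith
    exact mul_left_cancel₀ (by positivity) this
  obtain ⟨r, hr⟩ := hn
  have hrr : (n : ℝ) = r + r := by exact_mod_cast hr
  have hcard : S.card = r := by
    rcases lt_trichotomy S.card r with h | h | h
    · exfalso
      have : (S.card : ℝ) + 1 ≤ r := by exact_mod_cast h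
      nlinarith
    · exact h
    · exfalso
      have : (r : ℝ) + 1 ≤ S.card := by exact_mod_cast h
      nlinarith
  refine ⟨S, by omega, ?_⟩
  rw [← hAdef]
  rw [hcard, hrr] at hA
  linarith

end Converse2

section Forward
variable {c n : ℕ} {w : Fin n → ℕ} {W : ℝ}

open Classical in
noncomputable def fAlloc (c n : ℕ) (S : Finset (Fin n)) (t : Fin (n + 2 + c * n ^ 2)) :
    Option (GadgetV n × GadgetV n) :=
  if ht : t.val < n then some (if ⟨t.val, ht⟩ ∈ S then Sum.inl 1 else Sum.inl 2, Sum.inl 0)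
  else if t.val = n then some (Sum.inl 3, Sum.inl 1)
  else if t.val = n + 1 then some (Sum.inl 3, Sum.inl 2)
  else if hj : (t.val - (n + 2)) / c < n ^ 2 then
    if t.val - (n + 2) < c - 1 then some (Sum.inl 3, Sum.inr ⟨_, hj⟩)
    else some (Sum.inr ⟨_, hj⟩, Sum.inl 3)
  else none

open Classical in
lemma fAlloc_c {S : Finset (Fin n)} {t : ℕ} (h : t < n + 2 + c * n ^ 2) (ht : t < n) :
    fAlloc c n S ⟨t, h⟩ = some (if ⟨t, ht⟩ ∈ S then Sum.inl 1 else Sum.inl 2, Sum.inl 0) := by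
  simp [fAlloc, ht]

lemma fAlloc_e1 {S : Finset (Fin n)} (h : n < n + 2 + c * n ^ 2) :
    fAlloc c n S ⟨n, h⟩ = some (Sum.inl 3, Sum.inl 1) := by
  simp [fAlloc]

lemma fAlloc_e2 {S : Finset (Fin n)} (h : n + 1 < n + 2 + c * n ^ 2) :
    fAlloc c n S ⟨n + 1, h⟩ = some (Sum.inl 3, Sum.inl 2) := by
  simp [fAlloc]

lemma fAlloc_g {S : Finset (Fin n)} {j : ℕ} (h : n + 2 + j < n + 2 + c * n ^ 2) :
    fAlloc c n S ⟨n + 2 + j, h⟩ =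
      if j < c - 1 then some (Sum.inl 3, Sum.inr ⟨j / c, div_lt_aux h⟩)
      else some (Sum.inr ⟨j / c, div_lt_aux h⟩, Sum.inl 3) := by
  have h1 : ¬ (n + 2 + j < n) := by omega
  have h2 : ¬ (n + 2 + j = n) := by omega
  have h3 : ¬ (n + 2 + j = n + 1) := by omega
  have h4 : n + 2 + j - (n + 2) = j := by omega
  simp [fAlloc, h1, h2, h3, h4, div_lt_aux h]

noncomputable def qN (c n : ℕ) (w : Fin n → ℕ) (W : ℝ) (T : Finset (Fin n)) (t : ℕ) : ℝ :=
  ∑ i ∈ T with i.val < t, (c * ((w i : ℝ) + W) : ℝ)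

lemma qN_succ {T : Finset (Fin n)} {t : ℕ} (ht : t < n) :
    qN c n w W T (t + 1) = qN c n w W T t +
      if ⟨t, ht⟩ ∈ T then (c * ((w ⟨t, ht⟩ : ℝ) + W) : ℝ) else 0 := by
  unfold qN
  split_ifs with h
  · have : T.filter (fun i => i.val < t + 1) = insert ⟨t, ht⟩ (T.filter (fun i => i.val < t)) := by
      ext i
      simp only [Finset.mem_filter, Finset.mem_insert, Fin.ext_iff]
      constructor
      · rintro ⟨h1, h2⟩
        by_cases h3 : i.val = t
        · exact Or.inl h3
        · exact Or.inr ⟨h1, by omega⟩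
      · rintro (h1 | ⟨h1, h2⟩)
        · exact ⟨by rwa [show i = ⟨t, ht⟩ from Fin.ext h1], by omega⟩
        · exact ⟨h1, by omega⟩
    rw [this, Finset.sum_insert (by simp)]
    ring
  · have : T.filter (fun i => i.val < t + 1) = T.filter (fun i => i.val < t) := by
      apply Finset.filter_congr
      intro i hi
      have : i.val ≠ t := fun h3 => h (by rwa [show i = ⟨t, ht⟩ from Fin.ext h3] at hi)
      omega
    rw [this]; ring

lemma qN_le (hW : 0 ≤ W) (T : Finset (Fin n)) (t : ℕ) :
    qN c n w W T t ≤ qN c n w W T n := by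
  unfold qN
  apply Finset.sum_le_sum_of_subset_of_nonneg
  · intro i; simp +contextual
  · intros; positivity

lemma qN_end (T : Finset (Fin n)) : qN c n w W T n = c * (∑ i ∈ T, (w i : ℝ) + T.card * W) := by
  unfold qN
  rw [Finset.filter_true_of_mem (fun i _ => i.2), ← Finset.mul_sum, Finset.sum_add_distrib]
  simp

set_option maxHeartbeats 2000000 in
open Classical in
lemma forward_main (hc : 1 ≤ c) (hlarge : 4 * c ≤ n + 2)
    (hW : W = ∑ i, (w i : ℝ)) (S : Finset (Fin n)) (hS1 : 2 * S.card = n)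
    (hS2 : 2 * ∑ i ∈ S, (w i : ℝ) = W) :
    Feasible2PAA _ (gadgetBid c n w W) (gadgetBudget c n W) (fAlloc c n S) ∧
        value2PAA _ (gadgetBid c n w W) (gadgetBudget c n W) (fAlloc c n S) =
          c * W * ((n : ℝ) ^ 5 + n + 2) := by
  have hW0 : 0 ≤ W := by rw [hW]; positivity
  have hc1 : (1 : ℝ) ≤ c := by exact_mod_cast hc
  have hcW : 0 ≤ c * W := by positivity
  have hn2 : (2 : ℝ) ≤ n := by exact_mod_cast (by omega : 2 ≤ n)
  have hS1' : 2 * (S.card : ℝ) = n := by exact_mod_cast hS1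
  have hE1 : qN c n w W S n = c * W * (n + 1) / 2 := by
    rw [qN_end, show ∑ i ∈ S, (w i : ℝ) = W / 2 by linarith,
      show (S.card : ℝ) = n / 2 by linarith]; ring
  have hE2 : qN c n w W Sᶜ n = c * W * (n + 1) / 2 := by
    have h1 : ∑ i ∈ S, (w i : ℝ) + ∑ i ∈ Sᶜ, (w i : ℝ) = W := by
      rw [hW]; exact Finset.sum_add_sum_compl S _
    have h2 : (S.card : ℝ) + (Sᶜ.card : ℝ) = n := by
      have := Finset.card_add_card_compl S
      rw [Fintype.card_fin] at this
      exact_mod_cast this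
    rw [qN_end, show ∑ i ∈ Sᶜ, (w i : ℝ) = W / 2 by linarith,
      show (Sᶜ.card : ℝ) = n / 2 by linarith]; ring
  have hwi : ∀ i, (w i : ℝ) ≤ W := fun i => by
    rw [hW]; exact Finset.single_le_sum (f := fun i => (w i : ℝ)) (fun _ _ => by positivity)
      (Finset.mem_univ i)
  have hB0 : gadgetBudget c n W (Sum.inl 0) = c * W * (1 + (n:ℝ)/2) := by simp [gadgetBudget]
  have hB1 : gadgetBudget c n W (Sum.inl 1) = c * W * (1 + (n:ℝ)/2) := by simp [gadgetBudget]
  have hB2 : gadgetBudget c n W (Sum.inl 2) = c * W * (1 + (n:ℝ)/2) := by simp [gadgetBudget]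
  have hB3 : gadgetBudget c n W (Sum.inl 3) = c * W * ((n:ℝ)^3 + 1) := by simp [gadgetBudget]
  have hqa : ∀ i, (c * ((w i : ℝ) + W) : ℝ) ≤ c * W * (1 + (n:ℝ)/2) := by
    intro i
    have : (c:ℝ) * (w i : ℝ) ≤ c * W := by gcongr; exact hwi i
    nlinarith
  set R := budgetRem _ (gadgetBid c n w W) (gadgetBudget c n W) (fAlloc c n S) with hRdef
  -- phase 1
  have ph1 : ∀ t ≤ n, R t (Sum.inl 0) = c * W * (1 + (n:ℝ)/2) ∧
      R t (Sum.inl 1) = c * W * (1 + (n:ℝ)/2) - qN c n w W S t ∧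
      R t (Sum.inl 2) = c * W * (1 + (n:ℝ)/2) - qN c n w W Sᶜ t ∧
      R t (Sum.inl 3) = c * W * ((n:ℝ)^3 + 1) ∧
      ∀ i, R t (Sum.inr i) = c * W * (n:ℝ)^3 := by
    intro t ht
    induction t with
    | zero => 
      refine ⟨hB0, ?_, ?_, hB3, fun i => rfl⟩
      · rw [← hB1]; simp [hRdef, budgetRem, qN]
      · rw [← hB2]; simp [hRdef, budgetRem, qN]
    | succ t ih =>
      obtain ⟨i0, i1, i2, i3, i4⟩ := ih (by omega)
      have hm : t < n + 2 + c * n ^ 2 := by omega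
      have htn : t < n := by omega
      have hs := rem_succ_some (b := gadgetBid c n w W) (B := gadgetBudget c n W) hm
        (fAlloc_c (S := S) hm htn)
      rw [← hRdef] at hs
      simp only [i0, bid_c hm htn, true_or, if_true] at hs
      rw [min_eq_left (hqa _)] at hs
      rw [qN_succ htn, qN_succ htn]
      by_cases hmem : (⟨t, htn⟩ : Fin n) ∈ S
      · simp only [hs, hmem, if_true, Finset.mem_compl, not_true, if_false, i0, i1, i2, i3, i4]
        simp
        ring
      · simp only [hs, hmem, if_true, Finset.mem_compl, not_false_iff, if_false, i0, i1, i2, i3, i4]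
        simp
        ring
  have pr1 : ∀ t (ht : t < n), prN _ (gadgetBid c n w W) (gadgetBudget c n W) (fAlloc c n S) t
      = c * ((w ⟨t, ht⟩ : ℝ) + W) := by
    intro t ht
    have hm : t < n + 2 + c * n ^ 2 := by omega
    rw [prN_some hm (fAlloc_c hm ht), ← hRdef, (ph1 t ht.le).1, bid_c hm ht]
    simp only [true_or, if_true]
    exact min_eq_left (hqa _)
  -- phase 2
  obtain ⟨-, p1, p2, p3, p4⟩ := ph1 n le_rfl
  have hm1 : n < n + 2 + c * n ^ 2 := by omega
  have hm2 : n + 1 < n + 2 + c * n ^ 2 := by omega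
  have hr1 : R n (Sum.inl 1) = c * W / 2 := by rw [p1, hE1]; ring
  have hr2 : R n (Sum.inl 2) = c * W / 2 := by rw [p2, hE2]; ring
  have pre1 : prN _ (gadgetBid c n w W) (gadgetBudget c n W) (fAlloc c n S) n = c * W / 2 := by
    rw [prN_some hm1 (fAlloc_e1 hm1), ← hRdef, bid_e1]
    simp only [if_true, hr1]
    exact min_eq_right (by linarith)
  have s1 := rem_succ_some (b := gadgetBid c n w W) (B := gadgetBudget c n W) hm1
        (fAlloc_e1 (S := S) hm1)
  rw [← prN_some hm1 (fAlloc_e1 hm1), pre1, ← hRdef] at s1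
  have hr2' : R (n + 1) (Sum.inl 2) = c * W / 2 := by rw [s1, ← hr2]; simp
  have hr3' : R (n + 1) (Sum.inl 3) = c * W * ((n:ℝ)^3 + 1) - c * W / 2 := by rw [s1, p3]; simp
  have pre2 : prN _ (gadgetBid c n w W) (gadgetBudget c n W) (fAlloc c n S) (n + 1)
      = c * W / 2 := by
    rw [prN_some hm2 (fAlloc_e2 hm2), ← hRdef, bid_e2]
    simp only [if_true, hr2']
    exact min_eq_right (by linarith)
  have s2 := rem_succ_some (b := gadgetBid c n w W) (B := gadgetBudget c n W) hm2
        (fAlloc_e2 (S := S) hm2)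
  rw [← prN_some hm2 (fAlloc_e2 hm2), pre2, ← hRdef] at s2
  have hr3'' : R (n + 2) (Sum.inl 3) = c * W * (n:ℝ)^3 := by
    rw [show n + 2 = n + 1 + 1 from rfl, s2, hr3']; simp only [if_true]; ring
  have hr4'' : ∀ i, R (n + 2) (Sum.inr i) = c * W * (n:ℝ)^3 := by
    intro i
    rw [show n + 2 = n + 1 + 1 from rfl, s2, s1, p4]; simp
  -- phase 3
  have hN : 0 ≤ W * (n:ℝ)^3 := by positivity
  have hm3 : ∀ j, j < c * n ^ 2 → n + 2 + j < n + 2 + c * n ^ 2 := by intro j hj; omega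
  have hcm : ((c - 1 : ℕ) : ℝ) = c - 1 := by push_cast [hc]; ring
  have step3 : ∀ j, (hj : j < c * n ^ 2) →
      R (n + 2 + j) (Sum.inl 3) = ((c : ℝ) - (min j (c - 1) : ℕ)) * (W * (n:ℝ)^3) →
      (∀ i : Fin (n ^ 2), ((c : ℝ) - (j - i.val * c : ℕ)) * (W * (n:ℝ)^3)
        ≤ R (n + 2 + j) (Sum.inr i)) →
      (W * (n:ℝ)^3 ≤ R (n + 2 + j) (Sum.inl 3)) ∧
      (W * (n:ℝ)^3 ≤ R (n + 2 + j) (Sum.inr ⟨j / c, div_lt_aux (hm3 j hj)⟩)) ∧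
      prN _ (gadgetBid c n w W) (gadgetBudget c n W) (fAlloc c n S) (n + 2 + j) =
        W * (n:ℝ)^3 := by
    intro j hj hF hH
    have hm := hm3 j hj
    have hx1 : W * (n:ℝ)^3 ≤ R (n + 2 + j) (Sum.inl 3) := by
      rw [hF]
      have : ((min j (c - 1) : ℕ) : ℝ) ≤ c - 1 := by
        rw [← hcm]; exact_mod_cast min_le_right _ _
      nlinarith
    have hx2 : W * (n:ℝ)^3 ≤ R (n + 2 + j) (Sum.inr ⟨j / c, div_lt_aux hm⟩) := by
      refine le_trans ?_ (hH _)
      have h1 : j - j / c * c ≤ c - 1 := by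
        have := Nat.div_add_mod j c
        have h3 := Nat.mod_lt j (show c > 0 by omega)
        rw [mul_comm] at this
        omega
      have : ((j - j / c * c : ℕ) : ℝ) ≤ c - 1 := by
        rw [← hcm]; exact_mod_cast h1
      simp only
      nlinarith
    refine ⟨hx1, hx2, ?_⟩
    have hal := fAlloc_g (S := S) hm
    by_cases hjc : j < c - 1
    · rw [if_pos hjc] at hal
      rw [prN_some hm hal, ← hRdef, bid_g]
      simp only [reduceCtorEq, if_false, if_true]
      exact min_eq_left hx2
    · rw [if_neg hjc] at hal
      rw [prN_some hm hal, ← hRdef, bid_g]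
      simp only [if_true]
      rw [hF, min_eq_right (by omega : c - 1 ≤ j), hcm]
      rw [min_eq_right (by nlinarith)]
      ring
  have ph3 : ∀ j ≤ c * n ^ 2,
      R (n + 2 + j) (Sum.inl 3) = ((c : ℝ) - (min j (c - 1) : ℕ)) * (W * (n:ℝ)^3) ∧
      (∀ i : Fin (n ^ 2), ((c : ℝ) - (j - i.val * c : ℕ)) * (W * (n:ℝ)^3)
        ≤ R (n + 2 + j) (Sum.inr i)) := by
    intro j hj
    induction j with
    | zero =>
      refine ⟨?_, fun i => ?_⟩
      · rw [add_zero, hr3'']; simp; ring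
      · rw [add_zero, hr4'']; simp; linarith
    | succ j ih =>
      obtain ⟨hF, hH⟩ := ih (by omega)
      have hm := hm3 j (by omega)
      obtain ⟨-, -, hpr⟩ := step3 j (by omega) hF hH
      have hal := fAlloc_g (S := S) hm
      have hmono : ∀ i : ℕ, ((c : ℝ) - (j + 1 - i * c : ℕ)) * (W * (n:ℝ)^3) ≤
          ((c : ℝ) - (j - i * c : ℕ)) * (W * (n:ℝ)^3) := by
        intro i
        have : ((j - i * c : ℕ) : ℝ) ≤ ((j + 1 - i * c : ℕ) : ℝ) := by
          exact_mod_cast (by omega : j - i * c ≤ j + 1 - i * c)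
        nlinarith
      rw [show n + 2 + (j + 1) = n + 2 + j + 1 from rfl]
      by_cases hjc : j < c - 1
      · rw [if_pos hjc] at hal
        have hs := rem_succ_some (b := gadgetBid c n w W) (B := gadgetBudget c n W) hm hal
        rw [← prN_some hm hal, hpr, ← hRdef] at hs
        refine ⟨?_, fun i => ?_⟩
        · rw [hs]
          simp only [if_true]
          rw [hF, min_eq_left hjc.le, min_eq_left (by omega : j + 1 ≤ c - 1)]
          push_cast; ring
        · rw [hs]
          simp only [reduceCtorEq, if_false]
          exact (hmono i).trans (hH i)
      · rw [if_neg hjc] at hal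
        have hs := rem_succ_some (b := gadgetBid c n w W) (B := gadgetBudget c n W) hm hal
        rw [← prN_some hm hal, hpr, ← hRdef] at hs
        refine ⟨?_, fun i => ?_⟩
        · rw [hs]
          simp only [reduceCtorEq, if_false]
          rw [hF, min_eq_right (by omega : c - 1 ≤ j), min_eq_right (by omega : c - 1 ≤ j + 1)]
        · rw [hs]
          simp only [Sum.inr.injEq]
          split_ifs with hi
          · have hle : i.val * c ≤ j := by
              rw [hi]; exact Nat.div_mul_le_self j c
            have h1 : ((j + 1 - i.val * c : ℕ) : ℝ) = ((j - i.val * c : ℕ) : ℝ) + 1 := by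
              exact_mod_cast (by omega : j + 1 - i.val * c = j - i.val * c + 1)
            rw [h1]
            have := hH i
            nlinarith
          · exact (hmono i).trans (hH i)
  constructor
  · rintro ⟨t, hm⟩ p hp
    have hprice := prN_some (b := gadgetBid c n w W) (B := gadgetBudget c n W) hm hp
    simp only
    rw [← hprice, ← hRdef]
    rcases Nat.lt_or_ge t n with htn | htn
    · rw [pr1 t htn]
      rw [fAlloc_c hm htn] at hp
      obtain rfl := Option.some.inj hp
      have q1 := qN_le (c := c) (w := w) hW0 S (t + 1)
      have q2 := qN_le (c := c) (w := w) hW0 Sᶜ (t + 1)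
      rw [qN_succ htn] at q1 q2
      obtain ⟨i0, i1, i2, i3, i4⟩ := ph1 t htn.le
      by_cases hmem : (⟨t, htn⟩ : Fin n) ∈ S
      · simp only [hmem, if_true] at q1 ⊢
        refine ⟨by simp, ?_⟩
        rw [bid_c hm htn, i1]
        simp only [true_or, or_true, if_true]
        exact le_min le_rfl (by rw [hE1] at q1; linarith)
      · simp only [hmem, if_false, Finset.mem_compl, not_false_iff, if_true] at q2 ⊢
        refine ⟨by simp, ?_⟩
        rw [bid_c hm htn, i2]
        simp only [or_true, if_true]
        exact le_min le_rfl (by rw [hE2] at q2; linarith)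
    · rcases Nat.lt_or_ge t (n + 2) with h2 | h2
      · obtain rfl | rfl : t = n ∨ t = n + 1 := by omega
        · rw [fAlloc_e1 hm] at hp
          obtain rfl := Option.some.inj hp
          refine ⟨by simp, ?_⟩
          rw [pre1, bid_e1]
          simp [p3]
          nlinarith [show 0 ≤ c * W * (t:ℝ)^3 by positivity]
        · rw [fAlloc_e2 hm] at hp
          obtain rfl := Option.some.inj hp
          refine ⟨by simp, ?_⟩
          rw [pre2, bid_e2]
          simp [hr3']
          nlinarith [show 0 ≤ c * W * (n:ℝ)^3 by positivity]
      · obtain ⟨j, rfl⟩ := Nat.exists_eq_add_of_le h2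
        obtain ⟨hF, hH⟩ := ph3 j (by omega)
        obtain ⟨hx1, hx2, hpr⟩ := step3 j (by omega) hF hH
        rw [hpr]
        rw [fAlloc_g hm] at hp
        split_ifs at hp with hjc
        · obtain rfl := Option.some.inj hp
          refine ⟨by simp, le_min ?_ hx1⟩
          rw [bid_g]; simp only [if_true]; nlinarith
        · obtain rfl := Option.some.inj hp
          refine ⟨by simp, le_min ?_ hx2⟩
          rw [bid_g]; simp
  · rw [value_eq, Finset.sum_range_add, Finset.sum_range_succ, Finset.sum_range_succ, pre1, pre2,
      Finset.sum_range, Finset.sum_congr rfl (fun (i : Fin n) _ => pr1 i i.2),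
      Finset.sum_congr rfl (fun j hj => (step3 j (Finset.mem_range.1 hj)
        (ph3 j (Finset.mem_range.1 hj).le).1 (ph3 j (Finset.mem_range.1 hj).le).2).2.2)]
    have := sum_q (c := c) hW
    simp only [Fin.eta, Finset.sum_const, Finset.card_range, nsmul_eq_mul]
    rw [this]
    push_cast
    ring

end Forward

/-- in the PARTITION gadget instance for 2PAA(c) (with `n` even and
large enough that `(n/2 + 1)/2 ≥ c`): if the weights admit a balanced partition
(two sets of size `n/2`, each of weight `W/2`), then the instance has a feasible
second-price allocation of value at least `cW(n⁵ + n + 2)`; conversely, any feasible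
allocation of value at least `cW(n³ + cn² + n + 2)` yields such a balanced partition. -/
theorem stmt19 (c n : ℕ) (hc : 1 ≤ c) (hn : Even n) (hlarge : 4 * c ≤ n + 2)
    (w : Fin n → ℕ) (W : ℝ) (hW : W = ∑ i, (w i : ℝ)) :
    ((∃ S : Finset (Fin n), 2 * S.card = n ∧ 2 * ∑ i ∈ S, (w i : ℝ) = W) →
      ∃ alloc : Fin (n + 2 + c * n ^ 2) → Option (GadgetV n × GadgetV n),
        Feasible2PAA _ (gadgetBid c n w W) (gadgetBudget c n W) alloc ∧
        value2PAA _ (gadgetBid c n w W) (gadgetBudget c n W) alloc ≥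
          c * W * ((n : ℝ) ^ 5 + n + 2)) ∧
    ((∃ alloc : Fin (n + 2 + c * n ^ 2) → Option (GadgetV n × GadgetV n),
        Feasible2PAA _ (gadgetBid c n w W) (gadgetBudget c n W) alloc ∧
        value2PAA _ (gadgetBid c n w W) (gadgetBudget c n W) alloc ≥
          c * W * ((n : ℝ) ^ 3 + c * (n : ℝ) ^ 2 + n + 2)) →
      ∃ S : Finset (Fin n), 2 * S.card = n ∧ 2 * ∑ i ∈ S, (w i : ℝ) = W) := by
  have hn' : 2 ≤ n := by omega
  refine ⟨?_, ?_⟩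
  · rintro ⟨S, hS1, hS2⟩
    obtain ⟨h1, h2⟩ := forward_main hc hlarge hW S hS1 hS2
    exact ⟨_, h1, h2.ge⟩
  · rintro ⟨alloc, hf, hv⟩
    have hW0 : 0 ≤ W := by rw [hW]; positivity
    rcases hW0.eq_or_lt with h0 | hpos
    · obtain ⟨r, hr⟩ := hn
      obtain ⟨S, -, hS⟩ := Finset.exists_subset_card_eq (s := (Finset.univ : Finset (Fin n)))
        (n := r) (by simp; omega)
      refine ⟨S, by omega, ?_⟩
      have hz : ∀ i ∈ Finset.univ, (w i : ℝ) = 0 :=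
        (Finset.sum_eq_zero_iff_of_nonneg (fun i _ => by positivity)).1 (hW ▸ h0.symm)
      rw [Finset.sum_eq_zero (fun i _ => hz i (Finset.mem_univ i)), ← h0]
      simp
    · exact converse_main hc hn hlarge hW hpos hf hv
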